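/- Let f_2 be a self-usage utility function and let 0 ≤ p_a < p_b < q_a < f_2'(0). Set B_a = q_a − p_a, and let s_{2a}, s_{2b} ∈ (0,1) satisfy f_2'(1−s_{2a}) = q_a and f_2'(1−s_{2b}) = p_b (so s_{2b} < s_{2a}). Define the threshold t_a = [ (q_a − p_b)·s_{2a} − (f_2(1−s_{2b}) − f_2(1−s_{2a}) − p_b·(s_{2a} − s_{2b})) ] / B_a. Then: (a) t_a > 0; (b) owner 2 is indifferent to switching, i.e. f_2(1−s_{2a}) + p_a·s_{2a} + B_a·(s_{2a} − t_a) = f_2(1−s_{2b}) + p_b·s_{2b}; and (c) platform a's revenue is strictly positive: (q_a − p_a)·s_{2a} − B_a·(s_{2a} − t_a) = B_a·t_a > 0. Hence a linear loyalty program allows the weaker platform a to obtain strictly positive revenue whenever p_b < q_a. -/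

import Mathlib

/-!
Let `U_p(σ) = f(1 - σ) + p σ` be the owner's utility from sharing `σ` at price `p`. The threshold is
chosen so that platform a's revenue `B_a t_a` is exactly `U_{q_a}(s_{2a}) - U_{p_b}(s_{2b})`, the
surplus of renting directly at `q_a` over the outside option. By concavity, `f'(1 - s_{2a}) = q_a`
makes `s_{2a}` a maximiser of `U_{q_a}`, hence
`U_{q_a}(s_{2a}) ≥ U_{q_a}(s_{2b}) = U_{p_b}(s_{2b}) + (q_a - p_b) s_{2b} > U_{p_b}(s_{2b})`.
-/

/-- A self-usage utility function `f` with derivative `f'`: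
differentiable on `[0,1]`, strictly increasing on `[0,1]`,
strictly concave on `[0,1]` (with `f'` strictly decreasing), and `f' 1 = 0`. -/
def SelfUsage (f f' : ℝ → ℝ) : Prop :=
  (∀ x ∈ Set.Icc (0:ℝ) 1, HasDerivWithinAt f (f' x) (Set.Icc (0:ℝ) 1) x) ∧
  StrictMonoOn f (Set.Icc (0:ℝ) 1) ∧
  StrictConcaveOn ℝ (Set.Icc (0:ℝ) 1) f ∧
  StrictAntiOn f' (Set.Icc (0:ℝ) 1) ∧
  f' 1 = 0

/-- The utility of an owner with self-usage utility `f` who shares `s` at unit price `p` without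
a loyalty program. -/
def sharingUtility (f : ℝ → ℝ) (p s : ℝ) : ℝ :=
  f (1 - s) + p * s

section SharingUtility

variable {f : ℝ → ℝ} {S : Set ℝ}

lemma le_tangent_of_concaveOn {x y m : ℝ} (hf : ConcaveOn ℝ S f) (hx : x ∈ S) (hy : y ∈ S)
    (hm : HasDerivWithinAt f m S x) : f y ≤ f x + m * (y - x) := by
  rcases lt_trichotomy x y with hxy | rfl | hyx
  · have hslope := hf.slope_le_of_hasDerivWithinAt hx hy hxy hm
    rw [slope_def_field, div_le_iff₀ (sub_pos.mpr hxy)] at hslope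
    linarith
  · simp
  · have hslope := hf.le_slope_of_hasDerivWithinAt hy hx hyx hm
    rw [slope_def_field, le_div_iff₀ (sub_pos.mpr hyx)] at hslope
    linarith

lemma isMaxOn_sharingUtility {p s : ℝ} (hf : ConcaveOn ℝ S f) (hs : 1 - s ∈ S)
    (hp : HasDerivWithinAt f p S (1 - s)) :
    IsMaxOn (sharingUtility f p) {t | 1 - t ∈ S} s := by
  intro t ht
  have htangent := le_tangent_of_concaveOn hf hs ht hp
  change f (1 - t) + p * t ≤ f (1 - s) + p * s
  linarith

lemma sharingUtility_lt_sharingUtility_of_isMaxOn {p q s t : ℝ}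
    (hmax : IsMaxOn (sharingUtility f q) S s) (ht : t ∈ S) (ht_pos : 0 < t) (hpq : p < q) :
    sharingUtility f p t < sharingUtility f q s :=
  calc
    f (1 - t) + p * t < f (1 - t) + q * t := by gcongr
    _ ≤ sharingUtility f q s := hmax ht

lemma sharingUtility_sub_sharingUtility (f : ℝ → ℝ) (p q s t : ℝ) :
    sharingUtility f q s - sharingUtility f p t =
      (q - p) * s - (f (1 - t) - f (1 - s) - p * (s - t)) := by
  unfold sharingUtility
  ring

theorem LLP_positive_revenue_in_competition_general {pa pb qa Ba s2a s2b ta : ℝ}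
    (haq : pa < qa) (hbq : pb < qa) (hBa : Ba = qa - pa)
    (hmax : IsMaxOn (sharingUtility f qa) S s2a) (h2b : s2b ∈ S) (h2b_pos : 0 < s2b)
    (hta : ta = ((qa - pb) * s2a
      - (f (1 - s2b) - f (1 - s2a) - pb * (s2a - s2b))) / Ba) :
    0 < ta ∧
    f (1 - s2a) + pa * s2a + Ba * (s2a - ta) = f (1 - s2b) + pb * s2b ∧
    (qa - pa) * s2a - Ba * (s2a - ta) = Ba * ta ∧
    0 < Ba * ta := by
  have hBa_pos : 0 < Ba := hBa ▸ sub_pos.mpr haq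
  have hrevenue : Ba * ta = sharingUtility f qa s2a - sharingUtility f pb s2b := by
    rw [hta, sharingUtility_sub_sharingUtility, mul_div_cancel₀ _ hBa_pos.ne']
  have hrevenue_pos : 0 < Ba * ta :=
    hrevenue ▸ sub_pos.mpr (sharingUtility_lt_sharingUtility_of_isMaxOn hmax h2b h2b_pos hbq)
  refine ⟨(mul_pos_iff_of_pos_left hBa_pos).mp hrevenue_pos, ?_, ?_, hrevenue_pos⟩
  · unfold sharingUtility at hrevenue
    linear_combination s2a * hBa - hrevenue
  · linear_combination -s2a * hBa

end SharingUtility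

/-- with bonus B_a = q_a − p_a and the stated threshold t_a, the
weaker platform a makes owner 2 indifferent and earns strictly positive
revenue B_a·t_a whenever p_b < q_a. -/
theorem LLP_positive_revenue_in_competition
    (f f' : ℝ → ℝ) (hf : SelfUsage f f')
    (pa pb qa : ℝ) (hpa : 0 ≤ pa) (hab : pa < pb) (hbq : pb < qa) (hqf : qa < f' 0)
    (Ba : ℝ) (hBa : Ba = qa - pa)
    (s2a s2b : ℝ) (h2a : s2a ∈ Set.Ioo (0:ℝ) 1) (h2b : s2b ∈ Set.Ioo (0:ℝ) 1)
    (hda : f' (1 - s2a) = qa) (hdb : f' (1 - s2b) = pb)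
    (ta : ℝ)
    (hta : ta = ((qa - pb) * s2a
      - (f (1 - s2b) - f (1 - s2a) - pb * (s2a - s2b))) / Ba) :
    0 < ta ∧
    f (1 - s2a) + pa * s2a + Ba * (s2a - ta) = f (1 - s2b) + pb * s2b ∧
    (qa - pa) * s2a - Ba * (s2a - ta) = Ba * ta ∧
    0 < Ba * ta := by
  have hmem {s : ℝ} (hs : s ∈ Set.Ioo (0 : ℝ) 1) : 1 - s ∈ Set.Icc (0 : ℝ) 1 :=
    Set.Icc.one_sub_mem (Set.Ioo_subset_Icc_self hs)
  exact LLP_positive_revenue_in_competition_general (hab.trans hbq) hbq hBa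
    (isMaxOn_sharingUtility hf.2.2.1.concaveOn (hmem h2a) (hda ▸ hf.1 _ (hmem h2a)))
    (hmem h2b) h2b.1 hta
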